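/- Let G be a countable ICC group without property (T). Then G admits a unitary representation π on a Hilbert space which is weakly mixing (has no non-zero finite-dimensional subrepresentation) and has a sequence of unit vectors (ξᵢ) with ‖π(s)ξᵢ − ξᵢ‖ → 0 for every s ∈ G. -/

import Mathlib

open Filter

noncomputable section

/-- A unitary representation of a group `G`: a complex Hilbert space together with a
multiplicative action of `G` by unitary operators. -/
structure UnitaryRep (G : Type) [Group G] : Type 1 where
  H : Type
  [nacg : NormedAddCommGroup H]
  [ips : InnerProductSpace ℂ H]
  [cs : CompleteSpace H]
  π : G →* (H →L[ℂ] H)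
  unitary : ∀ g : G, π g ∈ unitary (H →L[ℂ] H)

attribute [instance] UnitaryRep.nacg UnitaryRep.ips UnitaryRep.cs

/-- A unitary representation is weakly mixing if it has no non-zero finite-dimensional
subrepresentation (invariant subspace). -/
def UnitaryRep.WeaklyMixing {G : Type} [Group G] (ρ : UnitaryRep G) : Prop :=
  ∀ K : Submodule ℂ ρ.H, (∀ (g : G), ∀ v ∈ K, ρ.π g v ∈ K) →
    FiniteDimensional ℂ K → K = ⊥

/-- Kazhdan's property (T) for a group `G`: there exist a finite `Q ⊆ G` and `ε > 0` such
that every unitary representation with a `(Q, ε)`-invariant unit vector has a non-zero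
invariant vector. -/
def GroupHasPropertyT (G : Type) [Group G] : Prop :=
  ∃ (Q : Finset G) (ε : ℝ), 0 < ε ∧
    ∀ ρ : UnitaryRep G, ∀ ξ : ρ.H, ‖ξ‖ = 1 → (∀ g ∈ Q, ‖ρ.π g ξ - ξ‖ ≤ ε) →
      ∃ v : ρ.H, v ≠ 0 ∧ ∀ g : G, ρ.π g v = v

/-- `G` is ICC: every non-trivial conjugacy class is infinite. -/
def IsICC (G : Type) [Group G] : Prop :=
  ∀ g : G, g ≠ 1 → {h : G | ∃ k : G, k * g * k⁻¹ = h}.Infinite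

/-!
If `G` does not have property (T), there are unitary representations `ρ j` with vectors `ξ j` such
that finite sets exhausting `G` move `ξ j` by at most `4⁻ʲ`, but some element moves `ξ j` by more
than `1 / 2`: otherwise the vector of minimal norm in the closed convex hull of the orbit would be
non-zero and invariant. The `ℓ²`-valued map `b g = (2ʲ (ρ j g (ξ j) - ξ j))ⱼ` is then unbounded,
and the distance `‖b x - b y‖` is left invariant.

For every `s`, the kernel `exp (-s² ‖b x - b y‖²)` is positive semidefinite by Schoenberg's theorem
and left invariant, so it comes from a unitary representation. Its coefficients tend to `0` as
`‖b g‖ → ∞`, which forces weak mixing, and the cyclic unit vectors become invariant as `s → 0`.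
Realizing a whole sequence of scales `s` as a block diagonal kernel gives a single representation.
-/

open Bornology Matrix Submodule Topology
open scoped ComplexOrder InnerProductSpace NNReal

section PosSemidef

variable {X 𝕜 : Type*} [RCLike 𝕜]

theorem sum_star_mul_gram_mul_eq_inner {E : Type*} [SeminormedAddCommGroup E]
    [InnerProductSpace 𝕜 E] (v : X → E) (f : X →₀ 𝕜) :
    (f.sum fun x a => f.sum fun y b => star a * gram 𝕜 v x y * b) =
      ⟪Finsupp.linearCombination 𝕜 v f, Finsupp.linearCombination 𝕜 v f⟫_𝕜 := by
  simp only [Finsupp.linearCombination_apply, Finsupp.sum, sum_inner, inner_smul_left, gram_apply,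
    RCLike.star_def]
  refine Finset.sum_congr rfl fun x _ => ?_
  simp only [inner_sum, inner_smul_right, Finset.mul_sum]
  exact Finset.sum_congr rfl fun y _ => by ring

theorem posSemidef_gram_kernel {E : Type*} [SeminormedAddCommGroup E] [InnerProductSpace 𝕜 E]
    (v : X → E) : (gram 𝕜 v).PosSemidef := by
  refine ⟨isHermitian_gram 𝕜 v, fun f => ?_⟩
  rw [sum_star_mul_gram_mul_eq_inner, RCLike.nonneg_iff]
  exact ⟨inner_self_nonneg, inner_self_im _⟩

theorem isClosed_setOf_posSemidef : IsClosed {A : Matrix X X 𝕜 | A.PosSemidef} := by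
  have hform (f : X →₀ 𝕜) :
      Continuous fun A : Matrix X X 𝕜 => f.sum fun x a => f.sum fun y b => star a * A x y * b := by
    unfold Finsupp.sum
    fun_prop
  simp only [PosSemidef, IsHermitian, Set.ofPred_and, Set.ofPred_forall]
  exact (isClosed_eq (by fun_prop) continuous_id).inter
    (isClosed_iInter fun f => isClosed_le continuous_const (hform f))

theorem posSemidef_map_pow {A : Matrix X X 𝕜} (hA : A.PosSemidef) (k : ℕ) :
    (A.map (· ^ k)).PosSemidef := by
  induction k with
  | zero =>
    have hone : A.map (· ^ 0) = gram 𝕜 fun _ : X => (1 : 𝕜) := by ext; simp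
    exact hone ▸ posSemidef_gram_kernel _
  | succ k ih =>
    have hsucc : A.map (· ^ (k + 1)) = A.map (· ^ k) ⊙ A := by ext; simp [pow_succ]
    exact hsucc ▸ ih.hadamard hA

theorem posSemidef_map_exp {A : Matrix X X ℂ} (hA : A.PosSemidef) :
    (A.map Complex.exp).PosSemidef := by
  have hsum : HasSum (fun k : ℕ => (k.factorial : ℂ)⁻¹ • A.map (· ^ k)) (A.map Complex.exp) := by
    refine Pi.hasSum.2 fun x => Pi.hasSum.2 fun y => ?_
    simpa [Complex.exp_eq_exp_ℂ, div_eq_inv_mul] using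
      NormedSpace.expSeries_div_hasSum_exp (A x y)
  refine isClosed_setOf_posSemidef.mem_of_tendsto hsum (.of_forall fun s => ?_)
  exact posSemidef_sum s fun k _ => (posSemidef_map_pow hA k).smul (by positivity)

end PosSemidef

section Gaussian

/-- The Gaussian kernel `exp (-d²)` of a map into a metric space. It takes complex values so that
the GNS construction yields a complex Hilbert space. -/
def gaussianKernel {X E : Type*} [PseudoMetricSpace E] (v : X → E) : Matrix X X ℂ :=
  .of fun x y => (Real.exp (-dist (v x) (v y) ^ 2) : ℂ)

variable {X E : Type*} [SeminormedAddCommGroup E] [InnerProductSpace ℂ E]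

theorem posSemidef_gaussianKernel (v : X → E) : (gaussianKernel v).PosSemidef := by
  have hgram := posSemidef_gram_kernel (𝕜 := ℂ) v
  have hnorm := posSemidef_gram_kernel (𝕜 := ℂ) fun x => (Real.exp (-‖v x‖ ^ 2) : ℂ)
  have hfactor : gaussianKernel v = gram ℂ (fun x => (Real.exp (-‖v x‖ ^ 2) : ℂ)) ⊙
      ((gram ℂ v).map Complex.exp ⊙ (gram ℂ v)ᵀ.map Complex.exp) := by
    ext x y
    have hre : (2 * RCLike.re ⟪v x, v y⟫_ℂ : ℂ) = ⟪v x, v y⟫_ℂ + ⟪v y, v x⟫_ℂ := by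
      rw [← inner_conj_symm (v y), RCLike.add_conj]; rfl
    have hsq : (dist (v x) (v y) ^ 2 : ℂ) =
        ‖v x‖ ^ 2 - (⟪v x, v y⟫_ℂ + ⟪v y, v x⟫_ℂ) + ‖v y‖ ^ 2 := by
      rw [← hre, dist_eq_norm]
      exact_mod_cast norm_sub_sq (𝕜 := ℂ) (v x) (v y)
    simp only [gaussianKernel, of_apply, hadamard_apply, map_apply, transpose_apply, gram_apply,
      RCLike.inner_apply, Complex.conj_ofReal]
    simp only [Complex.ofReal_exp, Complex.ofReal_neg, Complex.ofReal_pow, hsq, ← Complex.exp_add]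
    ring_nf
  rw [hfactor]
  exact hnorm.hadamard ((posSemidef_map_exp hgram).hadamard (posSemidef_map_exp hgram.transpose))

end Gaussian

section GramRealization

universe u w

theorem exists_gram_eq_of_posSemidef {X : Type u} {𝕜 : Type w} [RCLike 𝕜] {K : Matrix X X 𝕜}
    (hK : K.PosSemidef) :
    ∃ (H : Type (max u w)) (_ : NormedAddCommGroup H) (_ : InnerProductSpace 𝕜 H)
      (_ : CompleteSpace H) (v : X → H), gram 𝕜 v = K ∧ Dense (span 𝕜 (Set.range v) : Set H) := by
  let L : Matrix X X (𝕜 →L[𝕜] 𝕜) := K.map fun z => z • 1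
  have hLherm : L.IsHermitian := by
    ext x y
    simp [L, ← hK.isHermitian.apply x y]
  have hL : L.PosSemidef := by
    have htfae := (RKHS.posSemidef_tfae (K := L)).out 0 2
    refine htfae.2 ⟨hLherm, fun f => ?_⟩
    convert (RCLike.nonneg_iff.1 (hK.2 f)).1 using 2
    refine Finsupp.sum_congr fun x _ => Finsupp.sum_congr fun y _ => ?_
    simp only [L, map_apply, _root_.smul_apply, one_apply_eq_self, smul_eq_mul,
      RCLike.inner_apply, map_mul, RCLike.star_def, ← hK.isHermitian.apply x y]
    ring
  have := Fact.mk hL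
  refine ⟨RKHS.OfKernel L, inferInstance, inferInstance, inferInstance,
    fun x => RKHS.kerFun (RKHS.OfKernel L) x 1, ?_, ?_⟩
  · ext x y
    rw [gram_apply, ← RKHS.kernel_inner, RKHS.OfKernel.kernel_ofKernel]
    simp [L, ← hK.isHermitian.apply x y]
  · rw [dense_iff_topologicalClosure_eq_top, eq_top_iff, ← RKHS.kerFun_dense (RKHS.OfKernel L)]
    refine topologicalClosure_mono (span_le.2 ?_)
    rintro _ ⟨x, z, rfl⟩
    rw [← mul_one z, ← smul_eq_mul, map_smul]
    exact smul_mem _ z (subset_span ⟨x, rfl⟩)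

variable {X 𝕜 H H' : Type*} [RCLike 𝕜] [NormedAddCommGroup H] [InnerProductSpace 𝕜 H]
  [NormedAddCommGroup H'] [InnerProductSpace 𝕜 H']

theorem denseRange_linearCombination {v : X → H} (hv : Dense (span 𝕜 (Set.range v) : Set H)) :
    DenseRange (Finsupp.linearCombination 𝕜 v) := by
  rwa [DenseRange, ← LinearMap.coe_range, Finsupp.range_linearCombination]

theorem norm_linearCombination_eq_of_gram_eq {v : X → H} {w : X → H'} (hvw : gram 𝕜 v = gram 𝕜 w)
    (f : X →₀ 𝕜) : ‖Finsupp.linearCombination 𝕜 v f‖ = ‖Finsupp.linearCombination 𝕜 w f‖ := by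
  rw [@norm_eq_sqrt_re_inner 𝕜, @norm_eq_sqrt_re_inner 𝕜, ← sum_star_mul_gram_mul_eq_inner,
    ← sum_star_mul_gram_mul_eq_inner, hvw]

theorem exists_linearIsometryEquiv_of_gram_eq [CompleteSpace H] [CompleteSpace H']
    {v : X → H} {w : X → H'} (hv : Dense (span 𝕜 (Set.range v) : Set H))
    (hw : Dense (span 𝕜 (Set.range w) : Set H')) (hvw : gram 𝕜 v = gram 𝕜 w) :
    ∃ U : H ≃ₗᵢ[𝕜] H', ∀ x, U (v x) = w x := by
  have hnorm (f : X →₀ 𝕜) :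
      ‖Finsupp.linearCombination 𝕜 w (LinearEquiv.refl 𝕜 (X →₀ 𝕜) f)‖ =
        ‖Finsupp.linearCombination 𝕜 v f‖ :=
    (norm_linearCombination_eq_of_gram_eq hvw f).symm
  have hv' := denseRange_linearCombination hv
  have hw' := denseRange_linearCombination hw
  refine ⟨LinearEquiv.extendOfIsometry _ _ _ hv' hw' hnorm, fun x => ?_⟩
  have h := LinearEquiv.extendOfIsometry_eq _ _ _ hv' hw' hnorm (Finsupp.single x 1)
  simpa only [Finsupp.linearCombination_single, one_smul, LinearEquiv.refl_apply] using h

end GramRealization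

section UnitaryRep

variable {G : Type} [Group G]

namespace UnitaryRep

/-- The unitary representation given by a homomorphism into the group of linear isometric
automorphisms of a Hilbert space. -/
def ofLinearIsometryEquiv {H : Type} [NormedAddCommGroup H] [InnerProductSpace ℂ H]
    [CompleteSpace H] (U : G →* (H ≃ₗᵢ[ℂ] H)) : UnitaryRep G where
  H := H
  π := (_root_.unitary (H →L[ℂ] H)).subtype.comp
    ((Unitary.linearIsometryEquiv (𝕜 := ℂ) (H := H)).symm.toMonoidHom.comp U)
  unitary g := (Unitary.linearIsometryEquiv.symm (U g)).2

variable (ρ : UnitaryRep G)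

theorem inner_map (g : G) (v w : ρ.H) : ⟪ρ.π g v, ρ.π g w⟫_ℂ = ⟪v, w⟫_ℂ :=
  ContinuousLinearMap.inner_map_map_of_mem_unitary (ρ.unitary g) v w

theorem norm_map (g : G) (v : ρ.H) : ‖ρ.π g v‖ = ‖v‖ :=
  ContinuousLinearMap.norm_map_of_mem_unitary (ρ.unitary g) v

theorem mul_apply (g h : G) (v : ρ.H) : ρ.π (g * h) v = ρ.π g (ρ.π h v) := by
  rw [map_mul, mul_apply_eq_comp]

theorem one_apply (v : ρ.H) : ρ.π 1 v = v := by
  rw [map_one, one_apply_eq_self]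

theorem inner_map_right (g : G) (v w : ρ.H) : ⟪v, ρ.π g w⟫_ℂ = ⟪ρ.π g⁻¹ v, w⟫_ℂ := by
  rw [← ρ.inner_map g⁻¹, ← ρ.mul_apply, inv_mul_cancel, ρ.one_apply]

end UnitaryRep

theorem exists_unitaryRep_of_posSemidef {X : Type} [MulAction G X] {K : Matrix X X ℂ}
    (hK : K.PosSemidef) (hinv : ∀ (g : G) x y, K (g • x) (g • y) = K x y) :
    ∃ (ρ : UnitaryRep G) (v : X → ρ.H), gram ℂ v = K ∧ (∀ g x, ρ.π g (v x) = v (g • x)) ∧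
      Dense (span ℂ (Set.range v) : Set ρ.H) := by
  obtain ⟨H, _, _, _, v, hgram, hdense⟩ := exists_gram_eq_of_posSemidef hK
  have htranslate (g : G) : Set.range (fun x => v (g • x)) = Set.range v :=
    (MulAction.surjective g).range_comp v
  have hU (g : G) : ∃ U : H ≃ₗᵢ[ℂ] H, ∀ x, U (v x) = v (g • x) := by
    refine exists_linearIsometryEquiv_of_gram_eq hdense (by rwa [htranslate]) ?_
    ext x y
    rw [hgram, ← hinv g, ← hgram]
    rfl
  choose U hU using hU
  have hmul (g h : G) : U (g * h) = U g * U h := by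
    refine LinearIsometryEquiv.toContinuousLinearEquiv_injective
      (ContinuousLinearEquiv.coe_injective (ContinuousLinearMap.ext_on hdense ?_))
    rintro _ ⟨x, rfl⟩
    simp [hU, mul_smul]
  exact ⟨.ofLinearIsometryEquiv (.mk' U hmul), v, hgram, hU, hdense⟩

end UnitaryRep

section WeakMixing

variable {ι 𝕜 H : Type*} [RCLike 𝕜] [SeminormedAddCommGroup H] [InnerProductSpace 𝕜 H]
  {l : Filter ι} {u w : ι → H}

theorem tendsto_inner_zero_comm :
    Tendsto (fun i => ⟪u i, w i⟫_𝕜) l (𝓝 0) ↔ Tendsto (fun i => ⟪w i, u i⟫_𝕜) l (𝓝 0) := by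
  rw [tendsto_zero_iff_norm_tendsto_zero,
    tendsto_zero_iff_norm_tendsto_zero (f := fun i => ⟪w i, u i⟫_𝕜)]
  simp only [norm_inner_symm]

theorem tendsto_inner_zero_of_dense_span {C : ℝ≥0} (hC : ∀ i, ‖u i‖₊ ≤ C) {S : Set H}
    (hS : Dense (span 𝕜 S : Set H)) (h : ∀ s ∈ S, Tendsto (fun i => ⟪u i, s⟫_𝕜) l (𝓝 0)) (v : H) :
    Tendsto (fun i => ⟪u i, v⟫_𝕜) l (𝓝 0) := by
  have hequi : Equicontinuous fun i v => ⟪u i, v⟫_𝕜 :=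
    (LipschitzWith.uniformEquicontinuous _ C fun i =>
      LipschitzWith.of_dist_le_mul fun v w => by
        rw [dist_eq_norm, dist_eq_norm, ← inner_sub_right]
        exact (norm_inner_le_norm _ _).trans
          (mul_le_mul_of_nonneg_right (hC i) (norm_nonneg _))).equicontinuous
  refine hS.induction (fun s hs => ?_) (hequi.isClosed_setOfPred_tendsto continuous_const) v
  induction hs using span_induction with
  | mem s hs => exact h s hs
  | zero => simpa using tendsto_const_nhds
  | add v w _ _ hv hw => simpa only [inner_add_right, add_zero] using hv.add hw
  | smul a v _ hv => simpa only [inner_smul_right, mul_zero] using hv.const_mul a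

namespace UnitaryRep

variable {G : Type} [Group G] {ρ : UnitaryRep G} {l : Filter G}

theorem tendsto_inner_map_of_dense_span {S : Set ρ.H} (hS : Dense (span ℂ S : Set ρ.H))
    (h : ∀ s ∈ S, ∀ t ∈ S, Tendsto (fun g => ⟪s, ρ.π g t⟫_ℂ) l (𝓝 0)) (v w : ρ.H) :
    Tendsto (fun g => ⟪v, ρ.π g w⟫_ℂ) l (𝓝 0) := by
  have hbound (x : ρ.H) (g : G) : ‖ρ.π g x‖₊ ≤ ‖x‖₊ := (ρ.norm_map g x).le
  have hv (t) (ht : t ∈ S) : Tendsto (fun g => ⟪v, ρ.π g t⟫_ℂ) l (𝓝 0) :=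
    tendsto_inner_zero_comm.1 <| tendsto_inner_zero_of_dense_span (hbound t) hS
      (fun s hs => tendsto_inner_zero_comm.1 (h s hs t ht)) v
  simp only [ρ.inner_map_right] at hv ⊢
  have hbound' (g : G) : ‖ρ.π g⁻¹ v‖₊ ≤ ‖v‖₊ := hbound v g⁻¹
  exact tendsto_inner_zero_of_dense_span hbound' hS hv w

theorem weaklyMixing_of_tendsto_inner_map [l.NeBot]
    (h : ∀ v w : ρ.H, Tendsto (fun g => ⟪v, ρ.π g w⟫_ℂ) l (𝓝 0)) : ρ.WeaklyMixing := by
  refine fun K hK _ => (Submodule.eq_bot_iff _).2 fun v hv => ?_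
  let e := stdOrthonormalBasis ℂ K
  have hparseval (g : G) : ∑ i, ‖⟪(e i : ρ.H), ρ.π g v⟫_ℂ‖ ^ 2 = ‖v‖ ^ 2 := by
    rw [← ρ.norm_map g v]
    exact e.sum_sq_norm_inner_right ⟨ρ.π g v, hK g v hv⟩
  have hlim : Tendsto (fun g => ∑ i, ‖⟪(e i : ρ.H), ρ.π g v⟫_ℂ‖ ^ 2) l (𝓝 0) := by
    simpa using tendsto_finsetSum _ fun i _ => (h (e i) v).norm.pow 2
  simp only [hparseval] at hlim
  simpa using tendsto_nhds_unique tendsto_const_nhds hlim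

end UnitaryRep

end WeakMixing

section LeftInvariantDist

/-- The distance pulled back to `G` along `b` is left invariant, as it is for an orbit map
`b g = g • x` of an isometric action. Such maps stand in for affine isometric actions of `G`. -/
def LeftInvariantDist {G E : Type*} [Mul G] [Dist E] (b : G → E) : Prop :=
  ∀ g x y, dist (b (g * x)) (b (g * y)) = dist (b x) (b y)

theorem comap_cobounded_neBot {X E : Type*} [Bornology E] {b : X → E}
    (hb : ¬ IsBounded (Set.range b)) : (comap b (cobounded E)).NeBot := by
  refine comap_neBot fun s hs => ?_
  by_contra! h
  exact hb ((isBounded_compl_iff.2 hs).subset (Set.range_subset_iff.2 h))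

variable {G E : Type*} [Monoid G] [PseudoMetricSpace E] {b : G → E}

theorem LeftInvariantDist.tendsto_dist_mul (hb : LeftInvariantDist b) (x y : G) :
    Tendsto (fun g => dist (b x) (b (g * y))) (comap b (cobounded E)) atTop := by
  have hx : Tendsto (fun g => dist (b g) (b x) - dist (b 1) (b y)) (comap b (cobounded E)) atTop :=
    tendsto_atTop_add_const_right _ _
      ((Metric.tendsto_dist_right_cobounded_atTop (b x)).comp tendsto_comap)
  refine tendsto_atTop_mono (fun g => ?_) hx
  have hgy : dist (b g) (b (g * y)) = dist (b 1) (b y) := by simpa using hb g 1 y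
  linarith [dist_triangle_right (b g) (b x) (b (g * y))]

end LeftInvariantDist

section BlockGaussianKernel

variable {ι X E : Type*} [DecidableEq ι] [SeminormedAddCommGroup E] [InnerProductSpace ℂ E]

/-- The block diagonal kernel whose block at `i` is the Gaussian kernel of `s i • b`. The index set
is a `Sigma` type and not a product because an action on `X` then moves only the second
coordinate. -/
def blockGaussianKernel (s : ι → ℂ) (b : X → E) : Matrix (Σ _ : ι, X) (Σ _ : ι, X) ℂ :=
  (1 : Matrix ι ι ℂ).submatrix Sigma.fst Sigma.fst ⊙ gaussianKernel fun p => s p.1 • b p.2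

theorem posSemidef_blockGaussianKernel (s : ι → ℂ) (b : X → E) :
    (blockGaussianKernel s b).PosSemidef :=
  (PosSemidef.one.submatrix Sigma.fst).hadamard (posSemidef_gaussianKernel _)

theorem blockGaussianKernel_apply (s : ι → ℂ) (b : X → E) (p q : Σ _ : ι, X) :
    blockGaussianKernel s b p q =
      if p.1 = q.1 then (Real.exp (-(‖s p.1‖ * dist (b p.2) (b q.2)) ^ 2) : ℂ) else 0 := by
  obtain ⟨i, x⟩ := p
  obtain ⟨j, y⟩ := q
  obtain rfl | hij := eq_or_ne i j
  · simp [blockGaussianKernel, gaussianKernel, dist_smul₀]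
  · simp [blockGaussianKernel, hij]

theorem blockGaussianKernel_self (s : ι → ℂ) (b : X → E) (p : Σ _ : ι, X) :
    blockGaussianKernel s b p p = 1 := by
  simp [blockGaussianKernel_apply]

theorem tendsto_blockGaussianKernel_nhds_one {s : ι → ℂ} {l : Filter ι} (hs : Tendsto s l (𝓝 0))
    (b : X → E) (x y : X) :
    Tendsto (fun i => blockGaussianKernel s b ⟨i, x⟩ ⟨i, y⟩) l (𝓝 1) := by
  have hexponent : Tendsto (fun i => -(‖s i‖ * dist (b x) (b y)) ^ 2) l (𝓝 0) := by
    simpa using ((hs.norm.mul_const (dist (b x) (b y))).pow 2).neg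
  have hexp := (Complex.continuous_ofReal.comp Real.continuous_exp).tendsto' 0 1 (by simp)
  simpa [blockGaussianKernel_apply, Function.comp_def] using hexp.comp hexponent

theorem blockGaussianKernel_smul_smul {G : Type*} [Monoid G] (s : ι → ℂ) {b : G → E}
    (hb : LeftInvariantDist b) (g : G) (p q : Σ _ : ι, G) :
    blockGaussianKernel s b (g • p) (g • q) = blockGaussianKernel s b p q := by
  obtain ⟨i, x⟩ := p
  obtain ⟨j, y⟩ := q
  simp only [blockGaussianKernel_apply, Sigma.smul_mk, smul_eq_mul, hb g]

theorem tendsto_blockGaussianKernel_smul_nhds_zero {G : Type*} [Monoid G] {s : ι → ℂ}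
    (hs : ∀ i, s i ≠ 0) {b : G → E} (hb : LeftInvariantDist b) (p q : Σ _ : ι, G) :
    Tendsto (fun g => blockGaussianKernel s b p (g • q)) (comap b (cobounded E)) (𝓝 0) := by
  obtain ⟨i, x⟩ := p
  obtain ⟨j, y⟩ := q
  simp only [blockGaussianKernel_apply, Sigma.smul_mk, smul_eq_mul]
  split_ifs with hij
  · have hdist := (hb.tendsto_dist_mul x y).const_mul_atTop (norm_pos_iff.2 (hs i))
    have hexp := Real.tendsto_exp_neg_atTop_nhds_zero.comp
      ((tendsto_pow_atTop two_ne_zero).comp hdist)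
    exact (Complex.continuous_ofReal.tendsto' 0 0 Complex.ofReal_zero).comp hexp
  · exact tendsto_const_nhds

end BlockGaussianKernel

section AlmostInvariantVectors

theorem tendsto_norm_sub_zero_of_tendsto_inner_one {ι 𝕜 H : Type*} [RCLike 𝕜]
    [SeminormedAddCommGroup H] [InnerProductSpace 𝕜 H] {l : Filter ι} {u w : ι → H}
    (hu : ∀ i, ‖u i‖ = 1) (hw : ∀ i, ‖w i‖ = 1) (h : Tendsto (fun i => ⟪u i, w i⟫_𝕜) l (𝓝 1)) :
    Tendsto (fun i => ‖u i - w i‖) l (𝓝 0) := by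
  have hsq (i : ι) : ‖u i - w i‖ = √(2 - 2 * RCLike.re ⟪u i, w i⟫_𝕜) := by
    rw [← Real.sqrt_sq (norm_nonneg (u i - w i)), @norm_sub_sq 𝕜, hu, hw]
    ring_nf
  have hre : Tendsto (fun i => RCLike.re ⟪u i, w i⟫_𝕜) l (𝓝 1) := by
    simpa [Function.comp_def] using (RCLike.continuous_re.tendsto 1).comp h
  simp only [hsq]
  simpa using ((hre.const_mul 2).const_sub 2).sqrt

theorem LeftInvariantDist.exists_weaklyMixing_almostInvariant {G : Type} [Group G] {E : Type*}
    [SeminormedAddCommGroup E] [InnerProductSpace ℂ E] {b : G → E} (hb : LeftInvariantDist b)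
    (hunb : ¬ IsBounded (Set.range b)) :
    ∃ ρ : UnitaryRep G, ρ.WeaklyMixing ∧ ∃ ξ : ℕ → ρ.H, (∀ i, ‖ξ i‖ = 1) ∧
      ∀ g : G, Tendsto (fun i => ‖ρ.π g (ξ i) - ξ i‖) atTop (𝓝 0) := by
  let s (n : ℕ) : ℂ := 1 / ((n : ℂ) + 1)
  have hs : Tendsto s atTop (𝓝 0) := tendsto_one_div_add_atTop_nhds_zero_nat
  obtain ⟨ρ, v, hgram, hmap, hdense⟩ := exists_unitaryRep_of_posSemidef
    (posSemidef_blockGaussianKernel s b) (blockGaussianKernel_smul_smul s hb)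
  have hinner (p q) : ⟪v p, v q⟫_ℂ = blockGaussianKernel s b p q := congrFun₂ hgram p q
  have hnorm (p) : ‖v p‖ = 1 := by
    rw [@norm_eq_sqrt_re_inner ℂ, hinner, blockGaussianKernel_self, RCLike.one_re, Real.sqrt_one]
  have := comap_cobounded_neBot hunb
  refine ⟨ρ, UnitaryRep.weaklyMixing_of_tendsto_inner_map (l := comap b (cobounded E))
    (UnitaryRep.tendsto_inner_map_of_dense_span hdense ?_), fun n => v ⟨n, 1⟩, fun n => hnorm _,
    fun g => tendsto_norm_sub_zero_of_tendsto_inner_one (𝕜 := ℂ)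
      (fun n => (ρ.norm_map g _).trans (hnorm _)) (fun n => hnorm _) ?_⟩
  · rintro _ ⟨p, rfl⟩ _ ⟨q, rfl⟩
    simp only [hmap, hinner]
    exact tendsto_blockGaussianKernel_smul_nhds_zero
      (fun n => one_div_ne_zero n.cast_add_one_ne_zero) hb p q
  · simp only [hmap, hinner]
    exact tendsto_blockGaussianKernel_nhds_one hs b (g * 1) 1

end AlmostInvariantVectors

section FixedPoints

theorem eq_of_isMinOn_norm {E : Type*} [NormedAddCommGroup E] [NormedSpace ℝ E]
    [StrictConvexSpace ℝ E] {C : Set E} (hC : Convex ℝ C) {v w : E} (hv : v ∈ C) (hw : w ∈ C)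
    (hvmin : IsMinOn norm C v) (hwmin : IsMinOn norm C w) : v = w := by
  have hnorm : ‖v‖ = ‖w‖ := (hvmin hw).antisymm (hwmin hv)
  have hmid : (1 / 2 : ℝ) • (v + w) ∈ C := by
    simpa [smul_add] using hC hv hw (by norm_num) (by norm_num) (add_halves 1)
  exact not_ne_iff.1 fun hne => ((norm_midpoint_lt_iff hnorm).2 hne).not_ge (hvmin hmid)

theorem exists_isMinOn_norm {H : Type*} [NormedAddCommGroup H] [InnerProductSpace ℝ H]
    {C : Set H} (hne : C.Nonempty) (hcomplete : IsComplete C) (hconvex : Convex ℝ C) :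
    ∃ v ∈ C, IsMinOn norm C v := by
  obtain ⟨v, hv, hmin⟩ := exists_norm_eq_iInf_of_complete_convex hne hcomplete hconvex 0
  refine ⟨v, hv, fun w hw => ?_⟩
  simp only [zero_sub, norm_neg] at hmin
  rw [Set.mem_ofPred_eq, hmin]
  exact ciInf_le ⟨0, Set.forall_mem_range.2 fun _ => norm_nonneg _⟩ (⟨w, hw⟩ : C)

namespace UnitaryRep

variable {G : Type} [Group G] (ρ : UnitaryRep G)

theorem exists_invariant_mem_of_convex {C : Set ρ.H} (hne : C.Nonempty) (hclosed : IsClosed C)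
    (hconvex : Convex ℝ C) (hmaps : ∀ g, Set.MapsTo (ρ.π g) C C) :
    ∃ v ∈ C, ∀ g, ρ.π g v = v := by
  let _ : InnerProductSpace ℝ ρ.H := InnerProductSpace.rclikeToReal ℂ ρ.H
  obtain ⟨v, hv, hmin⟩ := exists_isMinOn_norm hne hclosed.isComplete hconvex
  refine ⟨v, hv, fun g => eq_of_isMinOn_norm hconvex (hmaps g hv) hv (fun w hw => ?_) hmin⟩
  rw [Set.mem_ofPred_eq, ρ.norm_map]
  exact hmin hw

theorem mapsTo_closedConvexHull_orbit (ξ : ρ.H) (g : G) :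
    Set.MapsTo (ρ.π g) (closedConvexHull ℝ (Set.range (ρ.π · ξ)))
      (closedConvexHull ℝ (Set.range (ρ.π · ξ))) := by
  refine closedConvexHull_min (Set.range_subset_iff.2 fun h => ?_)
    (convex_closedConvexHull.linear_preimage ((ρ.π g).restrictScalars ℝ).toLinearMap)
    (isClosed_closedConvexHull.preimage (ρ.π g).continuous)
  exact subset_closedConvexHull ⟨g * h, ρ.mul_apply g h ξ⟩

theorem exists_ne_zero_invariant_of_norm_sub_le {ξ : ρ.H} {r : ℝ} (hr : r < ‖ξ‖)
    (hξ : ∀ g, ‖ρ.π g ξ - ξ‖ ≤ r) : ∃ v : ρ.H, v ≠ 0 ∧ ∀ g, ρ.π g v = v := by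
  have hne : (closedConvexHull ℝ (Set.range (ρ.π · ξ))).Nonempty :=
    (Set.range_nonempty _).mono subset_closedConvexHull
  have hball : closedConvexHull ℝ (Set.range (ρ.π · ξ)) ⊆ Metric.closedBall ξ r :=
    closedConvexHull_min (Set.range_subset_iff.2 fun g => mem_closedBall_iff_norm.2 (hξ g))
      (convex_closedBall ξ r) Metric.isClosed_closedBall
  obtain ⟨v, hv, hinv⟩ := ρ.exists_invariant_mem_of_convex hne isClosed_closedConvexHull
    convex_closedConvexHull (ρ.mapsTo_closedConvexHull_orbit ξ)
  refine ⟨v, fun hv0 => hr.not_ge ?_, hinv⟩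
  simpa [hv0] using hball hv

end UnitaryRep

end FixedPoints

section NotPropertyT

variable {G : Type} [Group G]

theorem exists_unitaryRep_seq_of_not_propertyT [Countable G] (hnT : ¬ GroupHasPropertyT G)
    {ε : ℕ → ℝ} (hε : ∀ j, 0 < ε j) :
    ∃ (ρ : ℕ → UnitaryRep G) (ξ : ∀ j, (ρ j).H),
      (∀ g, ∀ᶠ j in atTop, ‖(ρ j).π g (ξ j) - ξ j‖ ≤ ε j) ∧
        ∀ j, ∃ g, 1 / 2 < ‖(ρ j).π g (ξ j) - ξ j‖ := by
  classical
  obtain ⟨e, he⟩ := exists_surjective_nat G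
  have hstep (j : ℕ) : ∃ (ρ : UnitaryRep G) (ξ : ρ.H),
      (∀ g ∈ (Finset.range (j + 1)).image e, ‖ρ.π g ξ - ξ‖ ≤ ε j) ∧
        ∃ g, 1 / 2 < ‖ρ.π g ξ - ξ‖ := by
    by_contra! hcon
    refine hnT ⟨(Finset.range (j + 1)).image e, ε j, hε j, fun ρ ξ hξ hsmall => ?_⟩
    exact ρ.exists_ne_zero_invariant_of_norm_sub_le (by rw [hξ]; norm_num) (hcon ρ ξ hsmall)
  choose ρ ξ hsmall hlarge using hstep
  refine ⟨ρ, ξ, fun g => ?_, hlarge⟩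
  obtain ⟨n, rfl⟩ := he g
  filter_upwards [eventually_ge_atTop n] with j hj
  exact hsmall j _ (Finset.mem_image_of_mem e (Finset.mem_range_succ_iff.2 hj))

theorem leftInvariantDist_lp_coboundary {ι : Type*} {ρ : ι → UnitaryRep G} {η : ∀ j, (ρ j).H}
    {b : G → lp (fun j => (ρ j).H) 2} (hb : ∀ g j, b g j = (ρ j).π g (η j) - η j) :
    LeftInvariantDist b := by
  intro g x y
  have hnorm (j : ι) : ‖(b (g * x) - b (g * y)) j‖ = ‖(b x - b y) j‖ := by
    simp only [lp.coeFn_sub, Pi.sub_apply, hb, sub_sub_sub_cancel_right, (ρ j).mul_apply,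
      ← map_sub, (ρ j).norm_map]
  simp only [dist_eq_norm, lp.norm_eq_tsum_rpow (p := 2) (by norm_num), hnorm]

theorem exists_unbounded_leftInvariantDist [Countable G] (hnT : ¬ GroupHasPropertyT G) :
    ∃ (E : Type) (_ : NormedAddCommGroup E) (_ : InnerProductSpace ℂ E) (b : G → E),
      LeftInvariantDist b ∧ ¬ IsBounded (Set.range b) := by
  obtain ⟨ρ, ξ, hsmall, hlarge⟩ :=
    exists_unitaryRep_seq_of_not_propertyT hnT (ε := fun j => (1 / 4) ^ j) fun j => by positivity
  let η (j : ℕ) : (ρ j).H := (2 ^ j : ℂ) • ξ j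
  have hη (g : G) (j : ℕ) : ‖(ρ j).π g (η j) - η j‖ = 2 ^ j * ‖(ρ j).π g (ξ j) - ξ j‖ := by
    simp [η, ← smul_sub, norm_smul]
  have hmem (g : G) : Memℓp (fun j => (ρ j).π g (η j) - η j) 2 := by
    refine memℓp_gen (.of_norm_bounded_eventually_nat
      (summable_geometric_of_lt_one (r := 1 / 4) (by norm_num) (by norm_num)) ?_)
    filter_upwards [hsmall g] with j hj
    calc ‖‖(ρ j).π g (η j) - η j‖ ^ (2 : ENNReal).toReal‖
        = (2 ^ j * ‖(ρ j).π g (ξ j) - ξ j‖) ^ 2 := by simp [hη]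
      _ ≤ (2 ^ j * (1 / 4) ^ j) ^ 2 := by gcongr
      _ = (1 / 4) ^ j := by rw [← mul_pow, ← pow_mul, mul_comm j, pow_mul]; norm_num
  let b (g : G) : lp (fun j => (ρ j).H) 2 := ⟨fun j => (ρ j).π g (η j) - η j, hmem g⟩
  refine ⟨_, inferInstance, inferInstance, b,
    leftInvariantDist_lp_coboundary fun _ _ => rfl, fun hb => ?_⟩
  obtain ⟨C, hC⟩ := hb.exists_norm_le
  obtain ⟨j, hj⟩ := pow_unbounded_of_one_lt (2 * C) (one_lt_two (α := ℝ))
  obtain ⟨g, hg⟩ := hlarge j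
  have hle := calc
    2 ^ j * ‖(ρ j).π g (ξ j) - ξ j‖ = ‖b g j‖ := (hη g j).symm
    _ ≤ ‖b g‖ := lp.norm_apply_le_norm two_ne_zero (b g) j
    _ ≤ C := hC _ ⟨g, rfl⟩
  linarith [mul_lt_mul_of_pos_left hg (pow_pos (two_pos (α := ℝ)) j)]

end NotPropertyT

theorem icc_not_propertyT_exists_weaklyMixing_almostInvariant_general
    (G : Type) [Group G] [Countable G] (hnT : ¬ GroupHasPropertyT G) :
    ∃ ρ : UnitaryRep G, ρ.WeaklyMixing ∧
      ∃ ξ : ℕ → ρ.H, (∀ i, ‖ξ i‖ = 1) ∧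
        ∀ s : G, Tendsto (fun i => ‖ρ.π s (ξ i) - ξ i‖) atTop (nhds 0) := by
  obtain ⟨E, _, _, b, hb, hunbounded⟩ := exists_unbounded_leftInvariantDist hnT
  exact hb.exists_weaklyMixing_almostInvariant hunbounded

/-- A countable ICC group without property (T) admits a weakly mixing unitary
representation with a sequence of almost invariant unit vectors. -/
theorem icc_not_propertyT_exists_weaklyMixing_almostInvariant
    (G : Type) [Group G] [Countable G] (hicc : IsICC G)
    (hnT : ¬ GroupHasPropertyT G) :
    ∃ ρ : UnitaryRep G, ρ.WeaklyMixing ∧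
      ∃ ξ : ℕ → ρ.H, (∀ i, ‖ξ i‖ = 1) ∧
        ∀ s : G, Tendsto (fun i => ‖ρ.π s (ξ i) - ξ i‖) atTop (nhds 0) :=
  icc_not_propertyT_exists_weaklyMixing_almostInvariant_general G hnT
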